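/- arXiv:1603.04944 — 6 statements merged into one kernel-verified Lean document; each statement's English description precedes it below -/
import Mathlib

section
/- Let Φ and φ be real numbers and let 𝕎 : ℝ → ℝ vanish on (−∞,0) and be continuous on [0,∞). Define f(t) = 𝕎(−t) + (Φ−φ)·∫_t^0 e^{−Φ(t−z)}·𝕎(−z) dz for t ≤ 0. Then for every x ≤ 0: ∫_x^0 e^{−φ(x−z)}·f(z) dz = ∫_x^0 e^{−Φ(x−z)}·𝕎(−z) dz. -/
open MeasureTheory Real Set Filter

/-- Identity (3.6) of the paper. -/
theorem stmt6 (Φ φ : ℝ) (𝕎 : ℝ → ℝ)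
    (h𝕎0 : ∀ u < (0 : ℝ), 𝕎 u = 0)
    (h𝕎c : ContinuousOn 𝕎 (Set.Ici (0 : ℝ)))
    (f : ℝ → ℝ)
    (hf : ∀ t ≤ (0 : ℝ),
      f t = 𝕎 (-t) + (Φ - φ) * ∫ z in t..(0 : ℝ), Real.exp (-Φ * (t - z)) * 𝕎 (-z)) :
    ∀ x ≤ (0 : ℝ),
      ∫ z in x..(0 : ℝ), Real.exp (-φ * (x - z)) * f z
        = ∫ z in x..(0 : ℝ), Real.exp (-Φ * (x - z)) * 𝕎 (-z) := by
  obtain ⟨V, hVc, hV⟩ : ∃ V : ℝ → ℝ, Continuous V ∧ ∀ z ≤ 0, 𝕎 (-z) = V z := by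
    refine ⟨fun z => 𝕎 (max (-z) 0), ?_, ?_⟩
    · exact h𝕎c.comp_continuous (by fun_prop) (fun z => mem_Ici.2 (le_max_right _ _))
    · intro z hz
      simp only
      rw [max_eq_left (by linarith)]
  have hhc : Continuous (fun z => Real.exp (Φ * z) * V z) := by fun_prop
  obtain ⟨G, hG⟩ : ∃ G : ℝ → ℝ, G = fun t => ∫ z in t..(0 : ℝ), Real.exp (Φ * z) * V z :=
    ⟨_, rfl⟩
  have hGd : ∀ t, HasDerivAt G (-(Real.exp (Φ * t) * V t)) t := by
    intro t
    rw [hG]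
    exact intervalIntegral.integral_hasDerivAt_left (hhc.intervalIntegrable _ _)
      hhc.aestronglyMeasurable.stronglyMeasurableAtFilter hhc.continuousAt
  have hGc : Continuous G := continuous_iff_continuousAt.2 fun t => (hGd t).continuousAt
  have hI : ∀ t ≤ (0 : ℝ), ∫ z in t..(0 : ℝ), Real.exp (-Φ * (t - z)) * 𝕎 (-z)
      = Real.exp (-Φ * t) * G t := by
    intro t ht
    rw [hG, ← intervalIntegral.integral_const_mul]
    apply intervalIntegral.integral_congr
    intro z hz
    rw [uIcc_of_le ht] at hz
    simp only
    rw [hV z hz.2, ← mul_assoc, ← Real.exp_add]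
    ring_nf
  intro x hx
  rw [hI x hx]
  have hH : ∀ z, HasDerivAt (fun z => -(Real.exp (-φ * x) * (Real.exp ((φ - Φ) * z) * G z)))
      (Real.exp (-φ * (x - z)) * (V z + (Φ - φ) * (Real.exp (-Φ * z) * G z))) z := by
    intro z
    have h1 : HasDerivAt (fun z : ℝ => Real.exp ((φ - Φ) * z))
        (Real.exp ((φ - Φ) * z) * ((φ - Φ) * 1)) z := ((hasDerivAt_id z).const_mul _).exp
    refine (((h1.mul (hGd z)).const_mul (Real.exp (-φ * x))).neg).congr_deriv ?_
    have e1 : Real.exp (-φ * (x - z)) = Real.exp (-φ * x) * Real.exp (φ * z) := by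
      rw [← Real.exp_add]; ring_nf
    have e2 : Real.exp ((φ - Φ) * z) = Real.exp (φ * z) * Real.exp (-Φ * z) := by
      rw [← Real.exp_add]; ring_nf
    have e3 : Real.exp (-Φ * z) * Real.exp (Φ * z) = 1 := by
      rw [← Real.exp_add]; ring_nf; simp
    rw [e1, e2]
    linear_combination (Real.exp (-φ * x) * Real.exp (φ * z) * V z) * e3
  have hcongr : ∫ z in x..(0 : ℝ), Real.exp (-φ * (x - z)) * f z
      = ∫ z in x..(0 : ℝ),
        Real.exp (-φ * (x - z)) * (V z + (Φ - φ) * (Real.exp (-Φ * z) * G z)) := by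
    apply intervalIntegral.integral_congr
    intro z hz
    rw [uIcc_of_le hx] at hz
    simp only
    rw [hf z hz.2, hI z hz.2, hV z hz.2]
  rw [hcongr, intervalIntegral.integral_eq_sub_of_hasDerivAt (fun z _ => hH z)
    (Continuous.intervalIntegrable (by fun_prop) _ _)]
  have hG0 : G 0 = 0 := by rw [hG]; simp
  have e : Real.exp (-Φ * x) = Real.exp (-φ * x) * Real.exp ((φ - Φ) * x) := by
    rw [← Real.exp_add]; ring_nf
  rw [hG0, e]
  ring
end

section
/- Let q, δ > 0 and 0 < Φ < φ be real numbers, let 𝕎 : ℝ → ℝ vanish on (−∞,0) and be continuous on [0,∞), define f(t) = 𝕎(−t) + (Φ−φ)·∫_t^0 e^{−Φ(t−z)}·𝕎(−z) dz for t ≤ 0, and define k : ℝ → ℝ by k(z) = (q(φ−Φ)/(φδ))·e^{−Φz} for z ≥ 0 and k(z) = (q(φ−Φ)/(φδ))·e^{−Φz} − (qΦ/φ)·f(z) for z < 0. Then for all reals b, x, y with b ≤ x ≤ y: (φ/Φ)·k(y−x) + ∫_{b−x}^{y−x} (φ(Φ−φ)/Φ)·e^{−φ(y−x−z)}·k(z)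 dz = (q(φ−Φ)/(δΦ))·e^{φ(b−y)}·e^{Φ(x−b)}·( 1 + δΦ·∫_{b−x}^0 e^{Φz}·𝕎(−z) dz ). -/
open MeasureTheory Real Set Filter

/-- Identity (3.7) of the paper: the case `b ≤ x ≤ y`. -/
theorem stmt8 (q δ Φ φ : ℝ) (hq : 0 < q) (hδ : 0 < δ) (hΦ : 0 < Φ) (hΦφ : Φ < φ)
    (𝕎 : ℝ → ℝ)
    (h𝕎0 : ∀ u < (0 : ℝ), 𝕎 u = 0)
    (h𝕎c : ContinuousOn 𝕎 (Set.Ici (0 : ℝ)))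
    (f : ℝ → ℝ)
    (hf : ∀ t ≤ (0 : ℝ),
      f t = 𝕎 (-t) + (Φ - φ) * ∫ z in t..(0 : ℝ), Real.exp (-Φ * (t - z)) * 𝕎 (-z))
    (k : ℝ → ℝ)
    (hk₁ : ∀ z : ℝ, 0 ≤ z → k z = (q * (φ - Φ) / (φ * δ)) * Real.exp (-Φ * z))
    (hk₂ : ∀ z : ℝ, z < 0 →
      k z = (q * (φ - Φ) / (φ * δ)) * Real.exp (-Φ * z) - (q * Φ / φ) * f z) :
    ∀ b x y : ℝ, b ≤ x → x ≤ y →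
      (φ / Φ) * k (y - x)
        + ∫ z in (b - x)..(y - x),
            (φ * (Φ - φ) / Φ) * Real.exp (-φ * (y - x - z)) * k z
        = (q * (φ - Φ) / (δ * Φ)) * Real.exp (φ * (b - y)) * Real.exp (Φ * (x - b))
            * (1 + δ * Φ * ∫ z in (b - x)..(0 : ℝ), Real.exp (Φ * z) * 𝕎 (-z)) := by
  intro b x y hbx hxy
  have hφ : 0 < φ := hΦ.trans hΦφ
  obtain ⟨a, ha⟩ : ∃ a, a = b - x := ⟨_, rfl⟩
  obtain ⟨c, hc⟩ : ∃ c, c = y - x := ⟨_, rfl⟩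
  have ha0 : a ≤ 0 := by linarith
  have hc0 : 0 ≤ c := by linarith
  rw [← ha, ← hc, show b - y = a - c by rw [ha, hc]; ring, show x - b = -a by rw [ha]; ring]
  obtain ⟨V, hV⟩ : ∃ V : ℝ → ℝ, V = fun z => 𝕎 (max (-z) 0) := ⟨_, rfl⟩
  have hVc : Continuous V := by
    rw [hV]
    exact h𝕎c.comp_continuous (by fun_prop) (fun z => Set.mem_Ici.2 (le_max_right _ _))
  have hVe : ∀ z ≤ (0 : ℝ), 𝕎 (-z) = V z := by
    intro z hz
    rw [hV]
    simp only
    rw [max_eq_left (by linarith)]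
  obtain ⟨G, hG⟩ : ∃ G : ℝ → ℝ, G = fun t => ∫ z in t..(0 : ℝ), Real.exp (Φ * z) * V z :=
    ⟨_, rfl⟩
  have hEV : Continuous fun z => Real.exp (Φ * z) * V z := by fun_prop
  have hGd : ∀ t, HasDerivAt G (-(Real.exp (Φ * t) * V t)) t := by
    intro t
    rw [hG]
    exact intervalIntegral.integral_hasDerivAt_left (hEV.intervalIntegrable _ _)
      (hEV.stronglyMeasurableAtFilter _ _) hEV.continuousAt
  have hGc : Continuous G := continuous_iff_continuousAt.2 fun t => (hGd t).continuousAt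
  have hG0 : G 0 = 0 := by rw [hG]; simp
  have hGa : ∀ t ≤ (0 : ℝ), ∫ z in t..(0 : ℝ), Real.exp (Φ * z) * 𝕎 (-z) = G t := by
    intro t ht
    rw [hG]
    apply intervalIntegral.integral_congr
    intro z hz
    rw [uIcc_of_le ht] at hz
    simp only [hVe z hz.2]
  have hfe : ∀ t ≤ (0 : ℝ), f t = V t + (Φ - φ) * (Real.exp (-Φ * t) * G t) := by
    intro t ht
    rw [hf t ht, hVe t ht, ← hGa t ht,
      ← intervalIntegral.integral_const_mul (Real.exp (-Φ * t))]
    congr 2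
    apply intervalIntegral.integral_congr
    intro z _
    simp only
    rw [← mul_assoc, ← Real.exp_add]
    congr 2
    ring
  have hE : ∀ z, HasDerivAt (fun z => Real.exp ((φ - Φ) * z))
      (Real.exp ((φ - Φ) * z) * (φ - Φ)) z := by
    intro z
    simpa using ((hasDerivAt_id z).const_mul (φ - Φ)).exp
  have hsub : φ - Φ ≠ 0 := by linarith
  have e1 : ∀ z, Real.exp (-φ * (c - z)) * Real.exp (-Φ * z)
      = Real.exp (-φ * c) * Real.exp ((φ - Φ) * z) := by
    intro z; rw [← Real.exp_add, ← Real.exp_add]; congr 1; ring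
  have e2 : ∀ z, Real.exp (-φ * (c - z))
      = Real.exp (-φ * c) * (Real.exp ((φ - Φ) * z) * Real.exp (Φ * z)) := by
    intro z; rw [← Real.exp_add, ← Real.exp_add]; congr 1; ring
  obtain ⟨g₁, hg₁⟩ : ∃ g : ℝ → ℝ, g = fun z => (φ * (Φ - φ) / Φ) * Real.exp (-φ * (c - z)) *
    ((q * (φ - Φ) / (φ * δ)) * Real.exp (-Φ * z)
      - (q * Φ / φ) * (V z + (Φ - φ) * (Real.exp (-Φ * z) * G z))) := ⟨_, rfl⟩
  obtain ⟨g₂, hg₂⟩ : ∃ g : ℝ → ℝ, g = fun z => (φ * (Φ - φ) / Φ) * Real.exp (-φ * (c - z)) *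
    ((q * (φ - Φ) / (φ * δ)) * Real.exp (-Φ * z)) := ⟨_, rfl⟩
  have hg₁c : Continuous g₁ := by rw [hg₁]; fun_prop
  have hg₂c : Continuous g₂ := by rw [hg₂]; fun_prop
  have I₁ : ∫ z in a..(0 : ℝ), g₁ z = _ :=
    intervalIntegral.integral_eq_sub_of_hasDerivAt
      (f := fun z => (φ * (Φ - φ) / Φ) * Real.exp (-φ * c) *
        ((q / (φ * δ)) * Real.exp ((φ - Φ) * z)
          + (q * Φ / φ) * (Real.exp ((φ - Φ) * z) * G z)))
      (fun z _ => by
        refine ((((hE z).const_mul (q / (φ * δ))).add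
          (((hE z).mul (hGd z)).const_mul (q * Φ / φ))).const_mul
            ((φ * (Φ - φ) / Φ) * Real.exp (-φ * c))).congr_deriv ?_
        rw [hg₁]
        linear_combination (φ * (Φ - φ) / Φ) * (q * Φ / φ) * V z * e2 z
          - (φ * (Φ - φ) / Φ) * ((q * (φ - Φ) / (φ * δ))
            - (q * Φ / φ) * (Φ - φ) * G z) * e1 z)
      (hg₁c.intervalIntegrable _ _)
  have I₂ : ∫ z in (0 : ℝ)..c, g₂ z = _ :=
    intervalIntegral.integral_eq_sub_of_hasDerivAt
      (f := fun z => (φ * (Φ - φ) / Φ) * Real.exp (-φ * c) *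
        ((q / (φ * δ)) * Real.exp ((φ - Φ) * z)))
      (fun z _ => by
        refine (((hE z).const_mul (q / (φ * δ))).const_mul
            ((φ * (Φ - φ) / Φ) * Real.exp (-φ * c))).congr_deriv ?_
        rw [hg₂]
        linear_combination
          - (φ * (Φ - φ) / Φ) * ((q * (φ - Φ) / (φ * δ))) * e1 z)
      (hg₂c.intervalIntegrable _ _)
  obtain ⟨h, hh⟩ : ∃ h : ℝ → ℝ, h = fun z =>
    (φ * (Φ - φ) / Φ) * Real.exp (-φ * (c - z)) * k z := ⟨_, rfl⟩
  have c₁ : g₁ =ᵐ[volume.restrict (Set.uIoc a 0)] h := by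
    rw [uIoc_of_le ha0, ← restrict_Ioo_eq_restrict_Ioc]
    refine (ae_restrict_iff' measurableSet_Ioo).2 (Eventually.of_forall fun z hz => ?_)
    rw [hg₁, hh]
    simp only [hk₂ z hz.2, hfe z hz.2.le]
  have c₂ : g₂ =ᵐ[volume.restrict (Set.uIoc 0 c)] h := by
    rw [uIoc_of_le hc0]
    refine (ae_restrict_iff' measurableSet_Ioc).2 (Eventually.of_forall fun z hz => ?_)
    rw [hg₂, hh]
    simp only [hk₁ z hz.1.le]
  have i₁ : IntervalIntegrable h volume a 0 := (hg₁c.intervalIntegrable a 0).congr_ae c₁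
  have i₂ : IntervalIntegrable h volume 0 c := (hg₂c.intervalIntegrable 0 c).congr_ae c₂
  have J : ∫ z in a..c, h z = (∫ z in a..(0 : ℝ), g₁ z) + ∫ z in (0 : ℝ)..c, g₂ z := by
    rw [← intervalIntegral.integral_add_adjacent_intervals i₁ i₂,
      intervalIntegral.integral_congr_ae_restrict c₁,
      intervalIntegral.integral_congr_ae_restrict c₂]
  have J' := J
  rw [hh, I₁, I₂] at J'
  rw [J', hk₁ c hc0, hGa a ha0, hG0]
  have e3 : Real.exp (-φ * c) * Real.exp ((φ - Φ) * c) = Real.exp (-Φ * c) := by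
    rw [← Real.exp_add]; congr 1; ring
  have e4 : Real.exp (φ * (a - c)) * Real.exp (Φ * -a)
      = Real.exp (-φ * c) * Real.exp ((φ - Φ) * a) := by
    rw [← Real.exp_add, ← Real.exp_add]; congr 1; ring
  rw [mul_assoc (q * (φ - Φ) / (δ * Φ)), e4, ← e3]
  field_simp
  ring
end

section
/- Let q, δ > 0 and 0 < Φ < φ be real numbers, let 𝕎 : ℝ → ℝ vanish on (−∞,0) and be continuous on [0,∞), define f(t) = 𝕎(−t) + (Φ−φ)·∫_t^0 e^{−Φ(t−z)}·𝕎(−z) dz for t ≤ 0, and define k : ℝ → ℝ by k(z) = (q(φ−Φ)/(φδ))·e^{−Φz} for z ≥ 0 and k(z) = (q(φ−Φ)/(φδ))·e^{−Φz} − (qΦ/φ)·f(z) for z < 0. Then for all reals b, x, y with b ≤ y < x: (φ/Φ)·k(y−x) + ∫_{b−x}^{y−x} (φ(Φ−φ)/Φ)·e^{−φ(y−x−z)}·k(z) dz = −q·𝕎(x−y) + (q(φ−Φ)/(δΦ))·e^{φ(b−y)}·e^{Φ(x−b)}·( 1 + δΦ·∫_{b−x}^0 e^{Φz}·𝕎(−z)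 dz ). -/
open MeasureTheory Real Set Filter

/-- Identity (3.10) of the paper: the case `b ≤ y < x`. -/
theorem stmt9 (q δ Φ φ : ℝ) (hq : 0 < q) (hδ : 0 < δ) (hΦ : 0 < Φ) (hΦφ : Φ < φ)
    (𝕎 : ℝ → ℝ)
    (h𝕎0 : ∀ u < (0 : ℝ), 𝕎 u = 0)
    (h𝕎c : ContinuousOn 𝕎 (Set.Ici (0 : ℝ)))
    (f : ℝ → ℝ)
    (hf : ∀ t ≤ (0 : ℝ),
      f t = 𝕎 (-t) + (Φ - φ) * ∫ z in t..(0 : ℝ), Real.exp (-Φ * (t - z)) * 𝕎 (-z))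
    (k : ℝ → ℝ)
    (hk₁ : ∀ z : ℝ, 0 ≤ z → k z = (q * (φ - Φ) / (φ * δ)) * Real.exp (-Φ * z))
    (hk₂ : ∀ z : ℝ, z < 0 →
      k z = (q * (φ - Φ) / (φ * δ)) * Real.exp (-Φ * z) - (q * Φ / φ) * f z) :
    ∀ b x y : ℝ, b ≤ y → y < x →
      (φ / Φ) * k (y - x)
        + ∫ z in (b - x)..(y - x),
            (φ * (Φ - φ) / Φ) * Real.exp (-φ * (y - x - z)) * k z
        = -q * 𝕎 (x - y)
            + (q * (φ - Φ) / (δ * Φ)) * Real.exp (φ * (b - y)) * Real.exp (Φ * (x - b))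
              * (1 + δ * Φ * ∫ z in (b - x)..(0 : ℝ), Real.exp (Φ * z) * 𝕎 (-z)) := by
  intro b x y hby hyx
  have hΦ' : Φ ≠ 0 := hΦ.ne'
  have hφ' : φ ≠ 0 := (hΦ.trans hΦφ).ne'
  have hδ' : δ ≠ 0 := hδ.ne'
  have hd : φ - Φ ≠ 0 := (sub_pos.2 hΦφ).ne'
  obtain ⟨V, hVc, hV⟩ : ∃ V : ℝ → ℝ, Continuous V ∧ ∀ z ≤ 0, 𝕎 (-z) = V z := by
    refine ⟨fun z => 𝕎 (max (-z) 0), ?_, ?_⟩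
    · exact h𝕎c.comp_continuous (by fun_prop) (fun z => Set.mem_Ici.2 (le_max_right _ _))
    · intro z hz
      simp only
      rw [max_eq_left (by linarith)]
  have hgc : Continuous fun z => Real.exp (Φ * z) * V z := by fun_prop
  obtain ⟨G, hG⟩ : ∃ G : ℝ → ℝ, ∀ t, G t = ∫ z in t..(0 : ℝ), Real.exp (Φ * z) * V z :=
    ⟨_, fun _ => rfl⟩
  have hGd : ∀ t, HasDerivAt G (-(Real.exp (Φ * t) * V t)) t := by
    intro t
    rw [funext hG]
    exact intervalIntegral.integral_hasDerivAt_left (hgc.intervalIntegrable _ _)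
      (hgc.stronglyMeasurableAtFilter _ _) hgc.continuousAt
  have hGW : ∀ t ≤ (0 : ℝ), (∫ z in t..(0 : ℝ), Real.exp (Φ * z) * 𝕎 (-z)) = G t := by
    intro t ht
    rw [hG]
    apply intervalIntegral.integral_congr
    intro z hz
    rw [uIcc_of_le ht] at hz
    simp only [hV z hz.2]
  have hfe : ∀ t ≤ (0 : ℝ), f t = V t + (Φ - φ) * (Real.exp (-Φ * t) * G t) := by
    intro t ht
    rw [hf t ht, hV t ht, ← hGW t ht, ← intervalIntegral.integral_const_mul (Real.exp (-Φ * t))]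
    congr 2
    apply intervalIntegral.integral_congr
    intro z _
    simp only
    rw [← mul_assoc, ← Real.exp_add]
    ring_nf
  have hke : ∀ z : ℝ, z < 0 → k z = (q * (φ - Φ) / (φ * δ)) * Real.exp (-Φ * z)
      - (q * Φ / φ) * (V z + (Φ - φ) * (Real.exp (-Φ * z) * G z)) := by
    intro z hz
    rw [hk₂ z hz, hfe z hz.le]
  have hGc : Continuous G := continuous_iff_continuousAt.2 fun t => (hGd t).continuousAt
  have hs : y - x < 0 := by linarith
  have hab : b - x ≤ y - x := by linarith
  have hW : 𝕎 (x - y) = V (y - x) := by rw [← hV _ hs.le]; congr 1; ring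
  have e1 : Real.exp (φ * (b - y)) * Real.exp (Φ * (x - b))
      = Real.exp (-φ * (y - x)) * Real.exp ((φ - Φ) * (b - x)) := by
    rw [← Real.exp_add, ← Real.exp_add]; ring_nf
  rw [hGW _ (by linarith), hW, mul_assoc (q * (φ - Φ) / (δ * Φ)), e1]
  generalize y - x = s at *
  generalize b - x = a at *
  have hint : (∫ z in a..s, (φ * (Φ - φ) / Φ) * Real.exp (-φ * (s - z)) * k z)
      = ∫ z in a..s, (φ * (Φ - φ) / Φ) * Real.exp (-φ * s) *
        (Real.exp (φ * z) * ((q * (φ - Φ) / (φ * δ)) * Real.exp (-Φ * z)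
      - (q * Φ / φ) * (V z + (Φ - φ) * (Real.exp (-Φ * z) * G z)))) := by
    apply intervalIntegral.integral_congr
    intro z hz
    rw [uIcc_of_le hab] at hz
    simp only
    rw [hke z (by linarith [hz.2]), show -φ * (s - z) = -φ * s + φ * z by ring, Real.exp_add]
    ring
  have hH : ∀ z, HasDerivAt
      (fun z => Real.exp ((φ - Φ) * z) * (q / (φ * δ) + (q * Φ / φ) * G z))
      (Real.exp (φ * z) * ((q * (φ - Φ) / (φ * δ)) * Real.exp (-Φ * z)
      - (q * Φ / φ) * (V z + (Φ - φ) * (Real.exp (-Φ * z) * G z)))) z := by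
    intro z
    have h1 : HasDerivAt (fun z => Real.exp ((φ - Φ) * z))
        (Real.exp ((φ - Φ) * z) * ((φ - Φ) * 1)) z :=
      ((hasDerivAt_id z).const_mul (φ - Φ)).exp
    have h2 := h1.mul (((hGd z).const_mul (q * Φ / φ)).const_add (q / (φ * δ)))
    refine h2.congr_deriv ?_
    have e2 : Real.exp ((φ - Φ) * z) = Real.exp (φ * z) * Real.exp (-Φ * z) := by
      rw [← Real.exp_add]; ring_nf
    have e3 : Real.exp (-Φ * z) * Real.exp (Φ * z) = 1 := by
      rw [← Real.exp_add]; simp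
    rw [e2]
    linear_combination (-(q * Φ / φ) * Real.exp (φ * z) * V z) * e3
  rw [hint, intervalIntegral.integral_const_mul,
    intervalIntegral.integral_eq_sub_of_hasDerivAt (fun z _ => hH z)
      (Continuous.intervalIntegrable (by fun_prop) _ _), hke s hs]
  have e4 : Real.exp (-φ * s) * Real.exp ((φ - Φ) * s) = Real.exp (-Φ * s) := by
    rw [← Real.exp_add]; ring_nf
  rw [← e4]
  field_simp
  ring
end

section
/- Let Φ and φ be real numbers with Φ ≠ φ, let a < 0, and let g : ℝ → ℝ be measurable, vanish on (−∞,0), and satisfy ∫_0^∞ e^{−φu}·|g(u)| du < ∞. Then ∫_a^0 e^{Φt}·( ∫_{−∞}^t e^{−φ(t−z)}·g(−z) dz ) dt = (1/(Φ−φ))·( ∫_{−∞}^0 e^{φz}·g(−z) dz − ∫_a^0 e^{Φz}·g(−z) dz − e^{Φa}·∫_{−∞}^a e^{−φ(a−z)}·g(−z) dz ). -/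
open MeasureTheory Real Set Filter

/-- Exchange-of-integration identity (4.2) of the paper (with `a = y - b`). -/
theorem stmt10 (Φ φ : ℝ) (hne : Φ ≠ φ) (a : ℝ) (ha : a < 0)
    (g : ℝ → ℝ) (hgm : Measurable g)
    (hg0 : ∀ u < (0 : ℝ), g u = 0)
    (hgint : IntegrableOn (fun u => Real.exp (-φ * u) * |g u|) (Set.Ioi (0 : ℝ))) :
    ∫ t in a..(0 : ℝ),
        Real.exp (Φ * t) * ∫ z in Set.Iic t, Real.exp (-φ * (t - z)) * g (-z)
      = (1 / (Φ - φ)) *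
          ((∫ z in Set.Iic (0 : ℝ), Real.exp (φ * z) * g (-z))
            - (∫ z in a..(0 : ℝ), Real.exp (Φ * z) * g (-z))
            - Real.exp (Φ * a) * ∫ z in Set.Iic a, Real.exp (-φ * (a - z)) * g (-z)) := by
  set c := Φ - φ with hc
  have hc0 : c ≠ 0 := sub_ne_zero.mpr hne
  set h : ℝ → ℝ := fun z => Real.exp (φ * z) * g (-z) with hh
  have hhm : Measurable h := by
    apply Measurable.mul (by fun_prop) (hgm.comp measurable_neg)
  have hint : IntegrableOn h (Iic 0) := by
    have h1 : IntegrableOn (fun u => Real.exp (-φ * u) * |g u|) (Ici (0:ℝ)) :=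
      hgint.congr_set_ae Ioi_ae_eq_Ici.symm
    have h2 : IntegrableOn (fun z => Real.exp (-φ * (-z)) * |g (-z)|) (Iic (0:ℝ)) := by
      have := h1.integrable_indicator measurableSet_Ici
      have h3 := this.comp_neg
      rw [← integrable_indicator_iff measurableSet_Iic]
      refine h3.congr (Eventually.of_forall fun z => ?_)
      by_cases hz : z ≤ 0
      · simp [indicator, hz]
      · simp [indicator, hz]
    refine Integrable.mono' h2 hhm.aestronglyMeasurable (Eventually.of_forall fun z => ?_)
    simp [hh, abs_mul]
  have hrw : ∀ t : ℝ, Real.exp (Φ * t) * ∫ z in Iic t, Real.exp (-φ * (t - z)) * g (-z)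
      = Real.exp (c * t) * ∫ z in Iic t, h z := by
    intro t
    rw [← integral_const_mul, ← integral_const_mul]
    congr 1
    funext z
    simp only [hh, ← mul_assoc, ← Real.exp_add]
    congr 2
    rw [hc]; ring
  simp only [hrw]
  have hin : ∀ t ∈ Ioc a 0, Real.exp (c * t) * ∫ z in Iic t, h z
      = ∫ z in Iic (0:ℝ), (Iic t).indicator (fun z => Real.exp (c * t) * h z) z := by
    intro t ht
    rw [setIntegral_indicator measurableSet_Iic, ← integral_const_mul,
      inter_eq_right.mpr (Iic_subset_Iic.mpr ht.2)]
  have hexp : IntegrableOn (fun t => Real.exp (c * t)) (Ioc a 0) := by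
    have : Continuous (fun t => Real.exp (c * t)) := by fun_prop
    exact (this.integrableOn_Icc).mono_set Ioc_subset_Icc_self
  have hprod : Integrable (Function.uncurry fun t z =>
      (Iic t).indicator (fun z => Real.exp (c * t) * h z) z)
      ((volume.restrict (Ioc a 0)).prod (volume.restrict (Iic (0:ℝ)))) := by
    have h1 := Integrable.mul_prod hexp hint
    have hm : MeasurableSet {p : ℝ × ℝ | p.2 ≤ p.1} :=
      measurableSet_le measurable_snd measurable_fst
    refine (h1.indicator hm).congr (Eventually.of_forall fun p => ?_)
    simp [indicator, Function.uncurry]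
  have hinner : ∀ z ∈ Iic (0:ℝ),
      ∫ t in Ioc a 0, (Iic t).indicator (fun z => Real.exp (c * t) * h z) z
      = c⁻¹ * (h z - Real.exp (c * max a z) * h z) := by
    intro z hz
    have hm : max a z ≤ 0 := max_le ha.le hz
    have e1 : ∀ t, (Iic t).indicator (fun z => Real.exp (c * t) * h z) z
        = (Ici z).indicator (fun t => Real.exp (c * t) * h z) t := by
      intro t; simp [indicator]
    simp only [e1]
    rw [setIntegral_indicator measurableSet_Ici]
    have e2 : (Ioc a 0 ∩ Ici z : Set ℝ) =ᵐ[volume] Ioc (max a z) 0 := by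
      have : (Ioc a 0 ∩ Ioi z : Set ℝ) = Ioc (max a z) 0 := by
        ext t; simp only [mem_inter_iff, mem_Ioc, mem_Ioi, max_lt_iff]; tauto
      rw [← this]
      exact (ae_eq_refl _).inter Ioi_ae_eq_Ici.symm
    rw [setIntegral_congr_set e2, ← intervalIntegral.integral_of_le hm,
      intervalIntegral.integral_mul_const, intervalIntegral.integral_comp_mul_left _ hc0,
      integral_exp]
    simp
    ring
  have hmax : IntegrableOn (fun z => Real.exp (c * max a z) * h z) (Iic 0) := by
    have hcont : Continuous fun z => Real.exp (c * max a z) := by fun_prop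
    refine Integrable.bdd_mul (c := Real.exp (|c| * |a|)) hint hcont.aestronglyMeasurable ?_
    refine (ae_restrict_iff' measurableSet_Iic).mpr (Eventually.of_forall fun z hz => ?_)
    rw [Real.norm_eq_abs, Real.abs_exp]
    apply Real.exp_le_exp.mpr
    refine (le_abs_self _).trans ?_
    rw [abs_mul]
    gcongr 1
    rw [abs_of_nonpos (max_le ha.le hz), abs_of_neg ha]
    simp
  rw [intervalIntegral.integral_of_le ha.le, setIntegral_congr_fun measurableSet_Ioc hin,
    integral_integral_swap hprod, setIntegral_congr_fun measurableSet_Iic hinner,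
    integral_const_mul, integral_sub hint hmax, ← Iic_union_Ioc_eq_Iic ha.le]
  rw [setIntegral_union (f := fun z => Real.exp (c * max a z) * h z)
    (Iic_disjoint_Ioc le_rfl) measurableSet_Ioc
    (hmax.mono_set (Iic_subset_Iic.mpr ha.le)) (hmax.mono_set Ioc_subset_Iic_self)]
  have r1 : ∫ z in Iic a, Real.exp (c * max a z) * h z
      = Real.exp (c * a) * ∫ z in Iic a, h z := by
    rw [← integral_const_mul]
    refine setIntegral_congr_fun measurableSet_Iic fun z hz => ?_
    simp only [max_eq_left (mem_Iic.mp hz)]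
  have r2 : ∫ z in Ioc a 0, Real.exp (c * max a z) * h z
      = ∫ z in a..(0:ℝ), Real.exp (Φ * z) * g (-z) := by
    rw [intervalIntegral.integral_of_le ha.le]
    refine setIntegral_congr_fun measurableSet_Ioc fun z hz => ?_
    simp only [max_eq_right hz.1.le, hh, ← mul_assoc, ← Real.exp_add]
    congr 2
    rw [hc]; ring
  rw [r1, r2]
  ring
end

section
/- Let δ > 0 and 0 < Φ < φ with Φ ≠ φ, and let g : ℝ → ℝ be measurable, vanish on (−∞,0), and satisfy ∫_0^∞ e^{−φu}·|g(u)| du < ∞; set C = ∫_0^∞ e^{−φu}·g(u) du. Define G(t) = (δφ/Φ)·( g(−t) − (φ−Φ)·∫_{−∞}^t e^{−φ(t−z)}·g(−z) dz ) for t ≤ 0. Then for all reals x, b, y with y < b: ∫_{y−x}^{b−x} G(y−x−z)·e^{−Φz} dz = (δφ/Φ)·( C·e^{Φ(x−y)} − e^{Φ(x−b)}·∫_{−∞}^{y−b} e^{−φ(y−b−z)}·g(−z) dz ). -/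
open MeasureTheory Real Set Filter

lemma stmt11_aux (a L C : ℝ) (h : ℝ → ℝ) (hh : IntervalIntegrable h volume 0 L) :
    ∫ s in (0:ℝ)..L, (Real.exp (a * s) * h s
        - a * Real.exp (a * s) * (C - ∫ u in (0:ℝ)..s, h u))
      = C - Real.exp (a * L) * (C - ∫ u in (0:ℝ)..L, h u) := by
  have hE : ∀ s : ℝ, HasDerivAt (fun s => Real.exp (a * s)) (a * Real.exp (a * s)) s := by
    intro s
    have := ((hasDerivAt_id s).const_mul a).exp
    simpa [mul_comm] using this
  have hEac : AbsolutelyContinuousOnInterval (fun s => Real.exp (a * s)) 0 L := by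
    have hc : ContDiff ℝ 1 (fun s : ℝ => Real.exp (a * s)) := by fun_prop
    obtain ⟨K, hK⟩ := hc.contDiffOn.exists_lipschitzOnWith (s := uIcc 0 L) one_ne_zero
      (convex_uIcc 0 L) isCompact_uIcc
    exact hK.absolutelyContinuousOnInterval
  have hPac : AbsolutelyContinuousOnInterval (fun s => ∫ u in (0:ℝ)..s, h u) 0 L :=
    hh.absolutelyContinuousOnInterval_intervalIntegral (by simp)
  have h1 := hEac.integral_deriv_mul_eq_sub hPac
  have hcont : Continuous fun s => a * Real.exp (a * s) := by fun_prop
  have h2 : ∫ s in (0:ℝ)..L, a * Real.exp (a * s) = Real.exp (a * L) - Real.exp (a * 0) :=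
    intervalIntegral.integral_eq_sub_of_hasDerivAt (fun s _ => hE s)
      (hcont.intervalIntegrable _ _)
  have h3 : ∫ s in (0:ℝ)..L, (a * Real.exp (a * s) * (∫ u in (0:ℝ)..s, h u)
      + Real.exp (a * s) * h s) = Real.exp (a * L) * ∫ u in (0:ℝ)..L, h u := by
    rw [intervalIntegral.integral_same, mul_zero, sub_zero] at h1
    rw [← h1]
    apply intervalIntegral.integral_congr_ae
    filter_upwards [hh.ae_hasDerivAt_integral] with s hs hs'
    rw [(hE s).deriv, (hs (uIoc_subset_uIcc hs') 0 (by simp)).deriv]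
  have i1 : IntervalIntegrable (fun s => a * Real.exp (a * s) * (∫ u in (0:ℝ)..s, h u)
      + Real.exp (a * s) * h s) volume 0 L := by
    apply IntervalIntegrable.add
    · exact (hcont.continuousOn.mul hPac.continuousOn).intervalIntegrable
    · exact hh.continuousOn_mul (by fun_prop)
  have h4 : ∫ s in (0:ℝ)..L, (Real.exp (a * s) * h s
        - a * Real.exp (a * s) * (C - ∫ u in (0:ℝ)..s, h u))
      = ∫ s in (0:ℝ)..L, ((a * Real.exp (a * s) * (∫ u in (0:ℝ)..s, h u)
      + Real.exp (a * s) * h s) - C * (a * Real.exp (a * s))) := by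
    congr 1
    ext s
    ring
  rw [h4, intervalIntegral.integral_sub i1 ((hcont.intervalIntegrable _ _).const_mul C), h3,
    intervalIntegral.integral_const_mul, h2]
  simp
  ring

/-- Identity (4.4) of the paper. -/
theorem stmt11 (δ Φ φ : ℝ) (hδ : 0 < δ) (hΦ : 0 < Φ) (hΦφ : Φ < φ) (hne : Φ ≠ φ)
    (g : ℝ → ℝ) (hgm : Measurable g)
    (hg0 : ∀ u < (0 : ℝ), g u = 0)
    (hgint : IntegrableOn (fun u => Real.exp (-φ * u) * |g u|) (Set.Ioi (0 : ℝ)))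
    (C : ℝ) (hC : C = ∫ u in Set.Ioi (0 : ℝ), Real.exp (-φ * u) * g u)
    (G : ℝ → ℝ)
    (hG : ∀ t ≤ (0 : ℝ),
      G t = (δ * φ / Φ) * (g (-t)
        - (φ - Φ) * ∫ z in Set.Iic t, Real.exp (-φ * (t - z)) * g (-z))) :
    ∀ x b y : ℝ, y < b →
      ∫ z in (y - x)..(b - x), G (y - x - z) * Real.exp (-Φ * z)
        = (δ * φ / Φ) * (C * Real.exp (Φ * (x - y))
            - Real.exp (Φ * (x - b))
              * ∫ z in Set.Iic (y - b), Real.exp (-φ * (y - b - z)) * g (-z)) := by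
  intro x b y hyb
  have hint : IntegrableOn (fun u => Real.exp (-φ * u) * g u) (Set.Ioi (0 : ℝ)) := by
    refine hgint.congr' ?_ ?_
    · exact (by fun_prop : Measurable fun u => Real.exp (-φ * u) * g u).aestronglyMeasurable
    · filter_upwards with u
      simp [abs_mul]
  have hI : ∀ t ≤ (0 : ℝ), (∫ z in Set.Iic t, Real.exp (-φ * (t - z)) * g (-z))
      = Real.exp (φ * (-t)) * (C - ∫ u in (0:ℝ)..(-t), Real.exp (-φ * u) * g u) := by
    intro t ht
    have h1 := integral_comp_neg_Iic t (fun u => Real.exp (-φ * (t + u)) * g u)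
    have h2 := intervalIntegral.integral_Ioi_sub_Ioi hint (by linarith : (0:ℝ) ≤ -t)
    rw [hC, ← h2, sub_sub_cancel, ← integral_const_mul]
    simp only [← sub_eq_add_neg] at h1
    rw [h1]
    congr 1
    ext u
    rw [← mul_assoc, ← Real.exp_add]
    ring_nf
  have hL : 0 ≤ b - y := by linarith
  have hii : IntervalIntegrable (fun u => Real.exp (-φ * u) * g u) volume 0 (b - y) := by
    rw [intervalIntegrable_iff_integrableOn_Ioc_of_le hL]
    exact hint.mono_set Set.Ioc_subset_Ioi_self
  have key := stmt11_aux (φ - Φ) (b - y) C _ hii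
  have hsub := intervalIntegral.integral_comp_add_right
    (a := 0) (b := b - y) (fun z => G (y - x - z) * Real.exp (-Φ * z)) (y - x)
  rw [show (0:ℝ) + (y - x) = y - x by ring, show b - y + (y - x) = b - x by ring] at hsub
  rw [← hsub, hI (y - b) (by linarith), neg_sub]
  have hcong : ∀ s ∈ Set.uIcc 0 (b - y),
      G (y - x - (s + (y - x))) * Real.exp (-Φ * (s + (y - x)))
      = (δ * φ / Φ * Real.exp (Φ * (x - y))) * (Real.exp ((φ - Φ) * s) * (Real.exp (-φ * s) * g s)
        - (φ - Φ) * Real.exp ((φ - Φ) * s) * (C - ∫ u in (0:ℝ)..s, Real.exp (-φ * u) * g u)) := by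
    intro s hs
    rw [Set.uIcc_of_le hL] at hs
    rw [show y - x - (s + (y - x)) = -s by ring, hG (-s) (by linarith [hs.1]),
      hI (-s) (by linarith [hs.1]), neg_neg]
    have e1 : Real.exp (-Φ * (s + (y - x))) = Real.exp (-Φ * s) * Real.exp (Φ * (x - y)) := by
      rw [← Real.exp_add]; ring_nf
    have e2 : Real.exp ((φ - Φ) * s) = Real.exp (φ * s) * Real.exp (-Φ * s) := by
      rw [← Real.exp_add]; ring_nf
    have e3 : Real.exp (φ * s) * Real.exp (-φ * s) = 1 := by
      rw [← Real.exp_add]; simp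
    rw [e1, e2]
    linear_combination (-(δ * φ / Φ) * Real.exp (Φ * (x - y)) * Real.exp (-Φ * s) * g s) * e3
  rw [intervalIntegral.integral_congr hcong, intervalIntegral.integral_const_mul, key]
  have e4 : Real.exp (Φ * (x - b)) * Real.exp (φ * (b - y))
      = Real.exp (Φ * (x - y)) * Real.exp ((φ - Φ) * (b - y)) := by
    rw [← Real.exp_add, ← Real.exp_add]; ring_nf
  linear_combination (δ * φ / Φ) * (C - ∫ u in (0:ℝ)..(b - y), Real.exp (-φ * u) * g u) * e4
end

section
/- Let q, δ > 0 and 0 < Φ < φ be real numbers. Let W : ℝ → ℝ vanish on (−∞,0), be continuous, nondecreasing and locally absolutely continuous on [0,∞) with a.e. derivative W′, satisfy e^{−φu}·W(u) → 0 as u → ∞ and ∫_0^∞ e^{−φu}·W(u) du = 1/(δφ). Define G(t) = (δφ/Φ)·( W′(−t) − (φ−Φ)·∫_{−∞}^t e^{−φ(t−z)}·W′(−z) dz ) for t ≤ 0, with W′ vanishing on (−∞,0). Then for all reals x, b, y with x ≤ y < b: (φ/Φ)·(1 − δ·W(0))·(q(φ−Φ)/(φδ))·e^{−Φ(y−x)}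 − ∫_{y−x}^{b−x} G(y−x−z)·(q(φ−Φ)/(φδ))·e^{−Φz} dz = (q(φ−Φ)/Φ)·e^{Φ(x−b)}·∫_{−∞}^{y−b} e^{−φ(y−b−z)}·W′(−z) dz. -/
open MeasureTheory Real Set Filter

lemma aux_exp_eq (k x : ℝ) : exp (k * x) = 1 + ∫ t in (0:ℝ)..x, k * exp (k * t) := by
  have h : ∫ t in (0:ℝ)..x, k * exp (k * t) = exp (k * x) - exp (k * 0) := by
    apply intervalIntegral.integral_eq_sub_of_hasDerivAt
    · intro t _
      have := ((hasDerivAt_id t).const_mul k).exp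
      simpa [mul_comm] using this
    · exact Continuous.intervalIntegrable (by fun_prop) _ _
  rw [h]; simp

lemma aux_ac (f : ℝ → ℝ) (hf : ∀ a b, IntervalIntegrable f volume a b) (F0 c : ℝ) :
    AbsolutelyContinuousOnInterval (fun x => F0 + ∫ t in (0:ℝ)..x, f t) 0 c := by
  have h1 := (hf 0 c).absolutelyContinuousOnInterval_intervalIntegral (c := 0) (by simp)
  have h2 : AbsolutelyContinuousOnInterval (fun _ : ℝ => F0) 0 c :=
    (LipschitzWith.const F0).lipschitzOnWith.absolutelyContinuousOnInterval
  exact h2.add h1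

lemma aux_ibp (f : ℝ → ℝ) (hf : ∀ a b, IntervalIntegrable f volume a b) (F0 k c : ℝ) :
    ∫ x in (0:ℝ)..c, (f x * exp (k * x) + (F0 + ∫ t in (0:ℝ)..x, f t) * (k * exp (k * x)))
      = (F0 + ∫ t in (0:ℝ)..c, f t) * exp (k * c) - F0 := by
  have h1 := aux_ac f hf F0 c
  have h2 : AbsolutelyContinuousOnInterval (fun x => exp (k * x)) 0 c := by
    have := aux_ac (fun t => k * exp (k * t))
      (fun a b => Continuous.intervalIntegrable (by fun_prop) _ _) 1 c
    simpa only [← aux_exp_eq] using this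
  have h3 := h1.integral_deriv_mul_eq_sub h2
  simp only [intervalIntegral.integral_same, add_zero, mul_zero, exp_zero, mul_one] at h3
  rw [← h3]
  apply intervalIntegral.integral_congr_ae
  filter_upwards [(hf 0 c).ae_hasDerivAt_integral] with x hx hx'
  have hd := ((hx (uIoc_subset_uIcc hx') 0 (by simp)).const_add F0).deriv
  have he : deriv (fun x => exp (k * x)) x = k * exp (k * x) := by
    have := ((hasDerivAt_id x).const_mul k).exp.deriv
    simpa [mul_comm] using this
  rw [hd, he]

/-- Identity (4.5) of the paper: the case `x ≤ y < b`. -/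
theorem stmt14 (q δ Φ φ : ℝ) (hq : 0 < q) (hδ : 0 < δ) (hΦ : 0 < Φ) (hΦφ : Φ < φ)
    (W W' : ℝ → ℝ)
    (hW0 : ∀ u < (0 : ℝ), W u = 0)
    (hWc : ContinuousOn W (Set.Ici (0 : ℝ)))
    (hWmono : Monotone W)
    (hW'meas : Measurable W')
    (hW'0 : ∀ u < (0 : ℝ), W' u = 0)
    (hW'int : ∀ b : ℝ, IntervalIntegrable W' MeasureTheory.volume 0 b)
    (hFTC : ∀ b ≥ (0 : ℝ), W b = W 0 + ∫ t in (0 : ℝ)..b, W' t)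
    (hWdecay : Filter.Tendsto (fun u => Real.exp (-φ * u) * W u) Filter.atTop (nhds 0))
    (hWint : IntegrableOn (fun u => Real.exp (-φ * u) * W u) (Set.Ioi (0 : ℝ)))
    (hWlap : ∫ u in Set.Ioi (0 : ℝ), Real.exp (-φ * u) * W u = 1 / (δ * φ))
    (G : ℝ → ℝ)
    (hG : ∀ t ≤ (0 : ℝ),
      G t = (δ * φ / Φ) * (W' (-t)
        - (φ - Φ) * ∫ z in Set.Iic t, Real.exp (-φ * (t - z)) * W' (-z))) :
    ∀ x b y : ℝ, x ≤ y → y < b →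
      (φ / Φ) * (1 - δ * W 0) * ((q * (φ - Φ) / (φ * δ)) * Real.exp (-Φ * (y - x)))
        - ∫ z in (y - x)..(b - x),
            G (y - x - z) * ((q * (φ - Φ) / (φ * δ)) * Real.exp (-Φ * z))
        = (q * (φ - Φ) / Φ) * Real.exp (Φ * (x - b))
            * ∫ z in Set.Iic (y - b), Real.exp (-φ * (y - b - z)) * W' (-z) := by
  intro x b y hxy hyb
  have hφ : 0 < φ := hΦ.trans hΦφ
  have hI : ∀ a b, IntervalIntegrable W' volume a b := fun a b =>
    (hW'int a).symm.trans (hW'int b)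
  have hloc : LocallyIntegrable W' volume := by
    intro t
    refine ⟨Ioc (t - 1) (t + 1), Ioc_mem_nhds (by linarith) (by linarith), ?_⟩
    exact (hI (t - 1) (t + 1)).1
  have hnn : ∀ᵐ t, 0 ≤ W' t := by
    filter_upwards [_root_.LocallyIntegrable.ae_hasDerivAt_integral hloc, (by simp [ae_iff, measure_singleton] :
      ∀ᵐ t : ℝ, t ≠ 0)] with t ht ht0
    rcases lt_or_gt_of_ne ht0 with h | h
    · rw [hW'0 t h]
    · have h1 := (ht 0).const_add (W 0)
      have h2 : HasDerivAt W (W' t) t := by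
        refine h1.congr_of_eventuallyEq ?_
        filter_upwards [Ioi_mem_nhds h] with s hs
        exact hFTC s (le_of_lt hs)
      exact h2.nonneg_of_monotone hWmono
  set f : ℝ → ℝ := fun u => exp (-φ * u) * W' u with hf
  have hfI : ∀ a b, IntervalIntegrable f volume a b := fun a b =>
    (hI a b).continuousOn_mul (by fun_prop)
  have hparts : ∀ c ≥ (0:ℝ), ∫ u in (0:ℝ)..c, f u
      = exp (-φ * c) * W c - W 0 + φ * ∫ u in (0:ℝ)..c, exp (-φ * u) * W u := by
    intro c hc
    have h := aux_ibp W' hI (W 0) (-φ) c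
    rw [← hFTC c hc] at h
    have hcont : IntervalIntegrable (fun u => exp (-φ * u) * W u) volume 0 c := by
      apply ContinuousOn.intervalIntegrable
      rw [uIcc_of_le hc]
      exact ContinuousOn.mul (by fun_prop) (hWc.mono Icc_subset_Ici_self)
    have h2 : ∫ x in (0:ℝ)..c, (W' x * exp (-φ * x)
        + (W 0 + ∫ t in (0:ℝ)..x, W' t) * (-φ * exp (-φ * x)))
        = ∫ x in (0:ℝ)..c, (f x - φ * (exp (-φ * x) * W x)) := by
      apply intervalIntegral.integral_congr
      intro s hs
      rw [uIcc_of_le hc] at hs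
      simp only [hf]
      rw [← hFTC s hs.1]; ring
    rw [h2, intervalIntegral.integral_sub (hfI _ _) (hcont.const_mul _),
      intervalIntegral.integral_const_mul] at h
    linarith
  have hlim : Tendsto (fun c => ∫ u in (0:ℝ)..c, f u) atTop (nhds (1 / δ - W 0)) := by
    have h1 := intervalIntegral_tendsto_integral_Ioi 0 hWint tendsto_id
    rw [hWlap] at h1
    have h2 := (hWdecay.sub_const (W 0)).add (h1.const_mul φ)
    have e : 0 - W 0 + φ * (1 / (δ * φ)) = 1 / δ - W 0 := by field_simp; ring
    rw [e] at h2
    refine h2.congr' ?_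
    filter_upwards [eventually_ge_atTop 0] with c hc
    exact (hparts c hc).symm
  have hfint : IntegrableOn f (Ioi 0) := by
    refine integrableOn_Ioi_of_intervalIntegral_norm_tendsto (1 / δ - W 0) 0
      (fun c => (hfI 0 c).1) tendsto_id (hlim.congr fun c => ?_)
    apply intervalIntegral.integral_congr_ae
    filter_upwards [hnn] with s hs _
    exact (Real.norm_of_nonneg (mul_nonneg (exp_pos _).le hs)).symm
  have hT0 : ∫ u in Ioi (0:ℝ), f u = 1 / δ - W 0 :=
    tendsto_nhds_unique (intervalIntegral_tendsto_integral_Ioi 0 hfint tendsto_id) hlim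
  have hT : ∀ s ≥ (0:ℝ), ∫ u in Ioi s, f u = (1 / δ - W 0) + ∫ u in (0:ℝ)..s, -f u := by
    intro s hs
    have h := intervalIntegral.integral_interval_add_Ioi hfint
      (hfint.mono_set (Ioi_subset_Ioi hs))
    rw [intervalIntegral.integral_neg]
    linarith
  have hH : ∀ s ≥ (0:ℝ), ∫ z in Iic (-s), exp (-φ * (-s - z)) * W' (-z)
      = exp (φ * s) * ((1 / δ - W 0) + ∫ u in (0:ℝ)..s, -f u) := by
    intro s hs
    have h := integral_comp_neg_Iic (-s) (fun u => exp (φ * s) * f u)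
    rw [neg_neg, integral_const_mul, integral_const_mul, hT s hs] at h
    rw [← h, ← integral_const_mul]
    congr 1
    ext z
    simp only [hf]
    rw [← mul_assoc, ← exp_add]
    congr 2; ring
  have hmain := aux_ibp (fun u => -f u) (fun a b => (hfI a b).neg) (1 / δ - W 0) (φ - Φ) (b - y)
  set R := (1 / δ - W 0) + ∫ u in (0:ℝ)..(b - y), -f u with hR
  have hint : ∫ z in (y - x)..(b - x),
            G (y - x - z) * ((q * (φ - Φ) / (φ * δ)) * Real.exp (-Φ * z))
      = -(q * (φ - Φ) / Φ * exp (-Φ * (y - x))) * (R * exp ((φ - Φ) * (b - y)) - (1 / δ - W 0)) := by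
    rw [← hmain, ← intervalIntegral.integral_const_mul]
    have hs := intervalIntegral.integral_comp_add_right (a := 0) (b := b - y)
      (fun z => G (y - x - z) * ((q * (φ - Φ) / (φ * δ)) * Real.exp (-Φ * z))) (y - x)
    rw [show (0:ℝ) + (y - x) = y - x by ring, show b - y + (y - x) = b - x by ring] at hs
    rw [← hs]
    apply intervalIntegral.integral_congr
    intro s hs
    rw [uIcc_of_le (by linarith)] at hs
    simp only
    rw [show y - x - (s + (y - x)) = -s by ring, hG (-s) (by linarith [hs.1]), hH s hs.1, neg_neg]
    simp only [hf]
    rw [show -Φ * (s + (y - x)) = -Φ * s + -Φ * (y - x) by ring,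
      show (φ - Φ) * s = φ * s + -Φ * s by ring, show -φ * s = -(φ * s) by ring, exp_add, exp_add,
      exp_neg (φ * s)]
    have := exp_pos (φ * s)
    field_simp
    ring
  rw [hint, show y - b = -(b - y) by ring, hH (b - y) (by linarith), ← hR,
    show Φ * (x - b) = -Φ * (y - x) + -Φ * (b - y) by ring,
    show (φ - Φ) * (b - y) = φ * (b - y) + -Φ * (b - y) by ring, exp_add, exp_add]
  field_simp
  ring
end
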